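/- Let x, y be pre-shapes in S^k_m that are well positioned, i.e. y xᵀ is symmetric and φ := arccos⟨x,y⟩ = min over R ∈ SO(m) of arccos⟨x, Ry⟩, with φ ∈ (0,π). Then for all 0 ≤ s ≤ t ≤ 1, min over R ∈ SO(m) of arccos⟨Φ(x,y,s), R Φ(x,y,t)⟩ = (t − s) · φ. In particular the horizontal geodesic Φ(x,y,·) projects to a shortest path of length φ in Kendall's shape space between the shapes of x and y. -/

import Mathlib

open Real Matrix

noncomputable section

/-- Frobenius inner product `⟨x,y⟩ = tr(x yᵀ)` on real `m × k` matrices. -/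
def fip {m k : ℕ} (x y : Matrix (Fin m) (Fin k) ℝ) : ℝ := Matrix.trace (x * yᵀ)

/-- The special orthogonal group `SO(m)` as a set of `m × m` real matrices. -/
def SOset (m : ℕ) : Set (Matrix (Fin m) (Fin m) ℝ) := {R | Rᵀ * R = 1 ∧ R.det = 1}

/-- The pre-shape space: centered configurations of unit Frobenius norm. -/
def isPreShape {m k : ℕ} (x : Matrix (Fin m) (Fin k) ℝ) : Prop :=
  (∀ i : Fin m, ∑ j : Fin k, x i j = 0) ∧ Real.sqrt (fip x x) = 1

/-- Spherical linear interpolation (slerp) of matrices with respect to the Frobenius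
inner product: `Φ(x,y,t) = (sin((1−t)φ)/sin φ) x + (sin(tφ)/sin φ) y`, `φ = arccos⟨x,y⟩`. -/
def mSlerp {m k : ℕ} (x y : Matrix (Fin m) (Fin k) ℝ) (t : ℝ) : Matrix (Fin m) (Fin k) ℝ :=
  (Real.sin ((1 - t) * Real.arccos (fip x y)) / Real.sin (Real.arccos (fip x y))) • x +
    (Real.sin (t * Real.arccos (fip x y)) / Real.sin (Real.arccos (fip x y))) • y

theorem fip_eq_sum {m k : ℕ} (x y : Matrix (Fin m) (Fin k) ℝ) :
    fip x y = ∑ i, ∑ j, x i j * y i j := by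
  simp [fip, Matrix.trace, Matrix.mul_apply]

theorem fip_comm {m k : ℕ} (x y : Matrix (Fin m) (Fin k) ℝ) : fip x y = fip y x := by
  simp [fip_eq_sum, mul_comm]

theorem fip_lin {m k : ℕ} (x y : Matrix (Fin m) (Fin k) ℝ) (a b c d : ℝ) :
    fip (a • x + b • y) (c • x + d • y) =
      a * c * fip x x + (a * d + b * c) * fip x y + b * d * fip y y := by
  simp only [fip_eq_sum, Finset.mul_sum, ← Finset.sum_add_distrib]
  refine Finset.sum_congr rfl fun i _ => Finset.sum_congr rfl fun j _ => ?_
  simp only [Matrix.add_apply, Matrix.smul_apply, smul_eq_mul]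
  ring

theorem fip_rot {m k : ℕ} (R : Matrix (Fin m) (Fin m) ℝ) (hR : Rᵀ * R = 1)
    (x y : Matrix (Fin m) (Fin k) ℝ) : fip (R * x) (R * y) = fip x y := by
  unfold fip
  rw [Matrix.transpose_mul, Matrix.mul_assoc, Matrix.trace_mul_comm, Matrix.mul_assoc,
    Matrix.mul_assoc, hR, Matrix.mul_one]

/-- The matrix as a Euclidean vector. -/
def toE {m k : ℕ} (x : Matrix (Fin m) (Fin k) ℝ) : EuclideanSpace ℝ (Fin m × Fin k) :=
  WithLp.toLp 2 fun p => x p.1 p.2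

theorem inner_toE {m k : ℕ} (x y : Matrix (Fin m) (Fin k) ℝ) :
    inner ℝ (toE x) (toE y) = fip x y := by
  simp [toE, fip_eq_sum, PiLp.inner_apply, Fintype.sum_prod_type, mul_comm]

theorem norm_toE {m k : ℕ} (x : Matrix (Fin m) (Fin k) ℝ) (h : fip x x = 1) :
    ‖toE x‖ = 1 := by
  rw [norm_eq_sqrt_real_inner, inner_toE, h, Real.sqrt_one]

theorem fip_triangle {m k : ℕ} (x y z : Matrix (Fin m) (Fin k) ℝ)
    (hx : fip x x = 1) (hy : fip y y = 1) (hz : fip z z = 1) :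
    Real.arccos (fip x z) ≤ Real.arccos (fip x y) + Real.arccos (fip y z) := by
  have := InnerProductGeometry.angle_le_angle_add_angle (toE x) (toE y) (toE z)
  simpa [InnerProductGeometry.angle, norm_toE, hx, hy, hz, inner_toE] using this

theorem fip_slerp {m k : ℕ} (x y : Matrix (Fin m) (Fin k) ℝ)
    (hx : fip x x = 1) (hy : fip y y = 1)
    (hc : Real.cos (Real.arccos (fip x y)) = fip x y)
    (hs : Real.sin (Real.arccos (fip x y)) ≠ 0) (s t : ℝ) :
    fip (mSlerp x y s) (mSlerp x y t) = Real.cos ((t - s) * Real.arccos (fip x y)) := by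
  unfold mSlerp
  rw [fip_lin, hx, hy]
  generalize Real.arccos (fip x y) = φ at *
  rw [← hc]
  have h1 := Real.sin_sq_add_cos_sq φ
  rw [sub_mul, sub_mul, sub_mul, one_mul, Real.sin_sub, Real.sin_sub, Real.cos_sub]
  field_simp
  have h2 : Real.cos φ ^ 2 = 1 - Real.sin φ ^ 2 := by linarith
  ring_nf
  rw [h2]
  ring

theorem stmt5 {m k : ℕ} (x y : Matrix (Fin m) (Fin k) ℝ)
    (hx : isPreShape x) (hy : isPreShape y)
    (hsym : (y * xᵀ).IsSymm)
    (hmin : ∀ R ∈ SOset m, Real.arccos (fip x y) ≤ Real.arccos (fip x (R * y)))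
    (hφ0 : 0 < Real.arccos (fip x y)) (hφπ : Real.arccos (fip x y) < Real.pi) :
    ∀ s t : ℝ, 0 ≤ s → s ≤ t → t ≤ 1 →
      IsLeast {a : ℝ | ∃ R ∈ SOset m,
          a = Real.arccos (fip (mSlerp x y s) (R * mSlerp x y t))}
        ((t - s) * Real.arccos (fip x y)) := by
  have hxx : fip x x = 1 := by simpa using hx.2
  have hyy : fip y y = 1 := by simpa using hy.2
  have hb : |fip x y| ≤ 1 := by
    have := abs_real_inner_le_norm (toE x) (toE y)
    rwa [inner_toE, norm_toE x hxx, norm_toE y hyy, one_mul] at this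
  have hc := Real.cos_arccos (abs_le.mp hb).1 (abs_le.mp hb).2
  have hs : Real.sin (Real.arccos (fip x y)) ≠ 0 := (Real.sin_pos_of_pos_of_lt_pi hφ0 hφπ).ne'
  have key := fip_slerp x y hxx hyy hc hs
  have hu : ∀ t, fip (mSlerp x y t) (mSlerp x y t) = 1 := fun t => by simp [key]
  have h0 : mSlerp x y 0 = x := by simp [mSlerp, hs]
  have h1 : mSlerp x y 1 = y := by simp [mSlerp, hs]
  have dist : ∀ s t, 0 ≤ s → s ≤ t → t ≤ 1 →
      Real.arccos (fip (mSlerp x y s) (mSlerp x y t)) = (t - s) * Real.arccos (fip x y) := by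
    intro s t h0s hst ht1
    rw [key, Real.arccos_cos]
    · exact mul_nonneg (by linarith) hφ0.le
    · nlinarith
  intro s t h0s hst ht1
  constructor
  · exact ⟨1, ⟨by simp, by simp⟩, by rw [Matrix.one_mul, dist s t h0s hst ht1]⟩
  · rintro a ⟨R, hR, rfl⟩
    have e1 := dist 0 s le_rfl h0s (hst.trans ht1)
    have e2 := dist t 1 (h0s.trans hst) ht1 le_rfl
    rw [h0] at e1
    rw [h1, ← fip_rot R hR.1] at e2
    have t1 := fip_triangle x (mSlerp x y s) (R * y) hxx (hu s) (by rw [fip_rot R hR.1, hyy])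
    have t2 := fip_triangle (mSlerp x y s) (R * mSlerp x y t) (R * y) (hu s)
      (by rw [fip_rot R hR.1, hu]) (by rw [fip_rot R hR.1, hyy])
    have := hmin R hR
    nlinarith

end
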